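/- In the category of finite-dimensional representations of K[t]/(t^p) over an algebraically closed field K of characteristic p > 2, the tensor product J_{p-1} ⊗ J_{p-1} decomposes as J_1 ⊕ (p-2)·J_p, where J_n denotes the indecomposable module on which t acts by a single nilpotent Jordan block of size n. -/

import Mathlib

/-!
The space `J_{p-1} ⊗ J_{p-1}` is `K[x, y]/(x^{p-1}, y^{p-1})` with `T = t ⊗ 1 + 1 ⊗ t` acting as
multiplication by `x + y`; write `B i j = v_i ⊗ v_j` for the monomial `x^i y^j`, of degree `i + j`.

* The alternating sum `w = ∑ (-1)^i B i (p-2-i)` has degree `p - 2` and is killed by `T`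
  (the sum telescopes), so it spans a copy of `J_1`.
* For `r < p - 2`, the vector `u_r = B 0 r` satisfies `T^p u_r = 0` by the characteristic `p`
  binomial theorem, so it generates an image of `J_p`, whose socle is spanned by
  `T^{p-1} u_r = ∑ C(p-1, m) B m (r+p-1-m)`.  This is nonzero, of degree `r + p - 1`, because
  `C(p-1, m)` is prime to `p`.

These vectors define an equivariant map `J_1 ⊕ (p-2) J_p → J_{p-1} ⊗ J_{p-1}`.  It sends the socle
of the source injectively, as the images of the socle generators are nonzero of pairwise distinct
degrees.  An equivariant map that is injective on the kernel of a nilpotent operator is injective,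
and both sides have dimension `(p-1)^2 = 1 + (p-2)p`.

Throughout the lemmas `p = q + 2`, which avoids subtraction in the index types.
-/

open TensorProduct

/-- The nilpotent Jordan block of size `n`: the action of `t` on the indecomposable
`K[t]/(t^p)`-module `J_n`, sending the basis vector `v_i` to `v_{i+1}` (and the last one to `0`). -/
def jordanShift (K : Type*) [Field K] (n : ℕ) : (Fin n → K) →ₗ[K] (Fin n → K) :=
  Matrix.toLin' (Matrix.of fun i j : Fin n => if (i : ℕ) = (j : ℕ) + 1 then 1 else 0)

/-- The action of the primitive element `t` on the tensor product `J_n ⊗ J_n`,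
namely `t ⊗ 1 + 1 ⊗ t`. -/
noncomputable def tTensorAction (K : Type*) [Field K] (n : ℕ) :
    TensorProduct K (Fin n → K) (Fin n → K) →ₗ[K] TensorProduct K (Fin n → K) (Fin n → K) :=
  LinearMap.rTensor (Fin n → K) (jordanShift K n) + LinearMap.lTensor (Fin n → K) (jordanShift K n)

/-! ### Monomials and the action of `t` -/

/-- The basis vector `v_i` of `J_n`, indexed by all `i : ℕ`; it is `0` when `n ≤ i`, so that
`t v_i = v_{i+1}` holds without exception. -/
def jvec (K : Type*) [Field K] (n i : ℕ) : Fin n → K := fun a => if (a : ℕ) = i then 1 else 0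

/-- The monomial `v_i ⊗ v_j` of `J_n ⊗ J_n`, zero as soon as `n ≤ i` or `n ≤ j`. -/
noncomputable def jmon (K : Type*) [Field K] (n i j : ℕ) :
    TensorProduct K (Fin n → K) (Fin n → K) := jvec K n i ⊗ₜ[K] jvec K n j

/-- The functional on `J_n ⊗ J_n` reading off the coefficient of `v_a ⊗ v_b`. -/
noncomputable def jcoeff (K : Type*) [Field K] (n : ℕ) (a b : Fin n) :
    TensorProduct K (Fin n → K) (Fin n → K) →ₗ[K] K :=
  LinearMap.mul' K K ∘ₗ TensorProduct.map (LinearMap.proj a) (LinearMap.proj b)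

section

variable {K : Type*} [Field K]

lemma jordanShift_zero (n : ℕ) (g : Fin (n + 1) → K) : jordanShift K (n + 1) g 0 = 0 := by
  simp [jordanShift, Matrix.mulVec, dotProduct]

lemma jordanShift_succ (n : ℕ) (g : Fin (n + 1) → K) (k : Fin n) :
    jordanShift K (n + 1) g k.succ = g k.castSucc := by
  have h : ∀ x : Fin (n + 1), ((k : ℕ) = (x : ℕ)) ↔ (x = k.castSucc) := by
    intro x
    rw [Fin.ext_iff, Fin.val_castSucc, eq_comm]
  simp [jordanShift, Matrix.mulVec, dotProduct, h]

lemma jvec_of_le {n i : ℕ} (h : n ≤ i) : jvec K n i = 0 := by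
  funext a
  have := a.2
  simp only [jvec, Pi.zero_apply, ite_eq_right_iff]
  omega

lemma jordanShift_jvec (n i : ℕ) : jordanShift K n (jvec K n i) = jvec K n (i + 1) := by
  cases n with
  | zero => exact Subsingleton.elim _ _
  | succ n =>
    funext a
    refine Fin.cases ?_ (fun k => ?_) a
    · rw [jordanShift_zero]
      simp [jvec]
    · rw [jordanShift_succ]
      simp [jvec]

lemma jordanShift_pow_jvec (n i k : ℕ) :
    (jordanShift K n ^ k) (jvec K n i) = jvec K n (i + k) := by
  induction k with
  | zero => simp
  | succ k ih => rw [pow_succ', Module.End.mul_apply, ih, jordanShift_jvec, add_assoc]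

lemma jmon_eq_zero {n i j : ℕ} (h : n ≤ i ∨ n ≤ j) : jmon K n i j = 0 := by
  rcases h with h | h <;> simp [jmon, jvec_of_le h]

lemma tTensorAction_jmon (n i j : ℕ) :
    tTensorAction K n (jmon K n i j) = jmon K n (i + 1) j + jmon K n i (j + 1) := by
  simp [tTensorAction, jmon, jordanShift_jvec]

lemma tTensorAction_pow_jmon (n i j k : ℕ) :
    (tTensorAction K n ^ k) (jmon K n i j) =
      ∑ m ∈ Finset.range (k + 1), (k.choose m : K) • jmon K n (i + m) (j + (k - m)) := by
  have hc : Commute (LinearMap.rTensor (Fin n → K) (jordanShift K n))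
      (LinearMap.lTensor (Fin n → K) (jordanShift K n)) := by
    ext
    simp
  rw [tTensorAction, hc.add_pow, LinearMap.sum_apply]
  refine Finset.sum_congr rfl fun m _ => ?_
  rw [← (Nat.cast_commute (k.choose m) _).eq, ← nsmul_eq_mul, LinearMap.smul_apply,
    Module.End.mul_apply, LinearMap.rTensor_pow, LinearMap.lTensor_pow, Nat.cast_smul_eq_nsmul]
  simp [jmon, jordanShift_pow_jvec]

lemma jcoeff_jmon (n : ℕ) (a b : Fin n) (i j : ℕ) :
    jcoeff K n a b (jmon K n i j) = if (a : ℕ) = i ∧ (b : ℕ) = j then 1 else 0 := by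
  simp only [jcoeff, jmon, jvec, LinearMap.comp_apply, TensorProduct.map_tmul, LinearMap.proj_apply,
    LinearMap.mul'_apply, ite_and]
  split_ifs <;> simp

/-! ### The invariant of degree `p - 2` -/

/-- The generator `∑ (-1)^i v_i ⊗ v_{q-i}` of the summand `J_1` of `J_{q+1} ⊗ J_{q+1}`. -/
noncomputable def jinv (K : Type*) [Field K] (q : ℕ) :
    TensorProduct K (Fin (q + 1) → K) (Fin (q + 1) → K) :=
  ∑ i ∈ Finset.range (q + 1), (-1 : K) ^ i • jmon K (q + 1) i (q - i)

lemma tTensorAction_jinv (q : ℕ) : tTensorAction K (q + 1) (jinv K q) = 0 := by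
  -- The `i`-th term of the image is the difference of consecutive values of
  -- `G i = (-1)^i B i (q+1-i)`, which vanishes at both ends.
  have key : ∀ i ∈ Finset.range (q + 1),
      tTensorAction K (q + 1) ((-1 : K) ^ i • jmon K (q + 1) i (q - i)) =
        (-1 : K) ^ i • jmon K (q + 1) i (q + 1 - i) -
          (-1 : K) ^ (i + 1) • jmon K (q + 1) (i + 1) (q + 1 - (i + 1)) := by
    intro i hi
    have hi' : q + 1 - i = q - i + 1 := by
      have := Finset.mem_range.1 hi
      omega
    rw [map_smul, tTensorAction_jmon, Nat.add_sub_add_right, hi', pow_succ]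
    module
  rw [jinv, map_sum, Finset.sum_congr rfl key,
    Finset.sum_range_sub' (fun i => (-1 : K) ^ i • jmon K (q + 1) i (q + 1 - i)),
    jmon_eq_zero (i := q + 1) (Or.inl le_rfl), jmon_eq_zero (i := 0) (Or.inr (by simp)),
    smul_zero, smul_zero, sub_zero]

lemma jcoeff_jinv (q : ℕ) (a b : Fin (q + 1)) :
    jcoeff K (q + 1) a b (jinv K q) = if (a : ℕ) + b = q then (-1) ^ (a : ℕ) else 0 := by
  have ha := a.2
  rw [jinv, map_sum, Finset.sum_eq_single (a : ℕ)]
  · have : ((b : ℕ) = q - a) ↔ ((a : ℕ) + b = q) := by omega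
    simp [jcoeff_jmon, this]
  · intro i _ hi
    simp [jcoeff_jmon, hi.symm]
  · intro h
    exact absurd (Finset.mem_range.2 ha) h

/-! ### The cyclic vectors `v_0 ⊗ v_r` -/

lemma tTensorAction_pow_char_jmon (q r : ℕ) [Fact (q + 2).Prime] [CharP K (q + 2)] :
    (tTensorAction K (q + 1) ^ (q + 2)) (jmon K (q + 1) 0 r) = 0 := by
  rw [tTensorAction_pow_jmon]
  refine Finset.sum_eq_zero fun m hm => ?_
  have hm := Finset.mem_range.1 hm
  by_cases h : m = 0 ∨ m = q + 2
  · rw [jmon_eq_zero (by omega), smul_zero]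
  · have hd : q + 2 ∣ (q + 2).choose m :=
      (Fact.out : (q + 2).Prime).dvd_choose_self (by omega) (by omega)
    rw [(CharP.cast_eq_zero_iff K (q + 2) _).2 hd, zero_smul]

lemma jcoeff_socle (q r : ℕ) (a b : Fin (q + 1)) :
    jcoeff K (q + 1) a b ((tTensorAction K (q + 1) ^ (q + 1)) (jmon K (q + 1) 0 r)) =
      if (a : ℕ) + b = r + (q + 1) then ((q + 1).choose a : K) else 0 := by
  have ha := a.2
  rw [tTensorAction_pow_jmon, map_sum, Finset.sum_eq_single (a : ℕ)]
  · have : ((b : ℕ) = r + (q + 1 - a)) ↔ ((a : ℕ) + b = r + (q + 1)) := by omega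
    simp [jcoeff_jmon, this]
  · intro i _ hi
    simp [jcoeff_jmon, hi.symm]
  · intro h
    exact absurd (Finset.mem_range.2 (by omega)) h

lemma cast_choose_ne_zero (q a : ℕ) [hp : Fact (q + 2).Prime] [CharP K (q + 2)]
    (ha : a ≤ q + 1) : ((q + 1).choose a : K) ≠ 0 := by
  intro h
  have hd := (CharP.cast_eq_zero_iff K (q + 2) _).1 h
  have hf : q + 2 ∣ (q + 1).factorial := by
    rw [← Nat.choose_mul_factorial_mul_factorial ha, mul_assoc]
    exact Dvd.dvd.mul_right hd _
  have := (hp.out.dvd_factorial).1 hf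
  omega

/-! ### The equivariant map from `J_1 ⊕ (p-2) J_p` -/

/-- The `t`-action on `J_1 ⊕ q J_{q+2}`. -/
def sumAction (K : Type*) [Field K] (q : ℕ) :
    Module.End K ((Fin 1 → K) × (Fin q → (Fin (q + 2) → K))) :=
  LinearMap.prod 0
    (LinearMap.pi fun r => jordanShift K (q + 2) ∘ₗ LinearMap.proj r ∘ₗ LinearMap.snd K _ _)

lemma sumAction_apply (q : ℕ) (x : (Fin 1 → K) × (Fin q → (Fin (q + 2) → K))) :
    sumAction K q x = (0, fun r => jordanShift K (q + 2) (x.2 r)) := rfl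

lemma sumAction_pow_coord (q m : ℕ) (x : (Fin 1 → K) × (Fin q → (Fin (q + 2) → K)))
    (r : Fin q) (k : Fin (q + 2)) (hk : (k : ℕ) < m) : ((sumAction K q ^ m) x).2 r k = 0 := by
  induction m generalizing k with
  | zero => omega
  | succ m ih =>
    rw [pow_succ', Module.End.mul_apply, sumAction_apply]
    revert hk
    refine Fin.cases (fun _ => ?_) (fun j hj => ?_) k
    · exact jordanShift_zero _ _
    · refine (jordanShift_succ _ _ _).trans (ih _ ?_)
      simpa using hj

lemma sumAction_pow_eq_zero (q : ℕ) (x : (Fin 1 → K) × (Fin q → (Fin (q + 2) → K))) :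
    (sumAction K q ^ (q + 3)) x = 0 := by
  refine Prod.ext ?_ ?_
  · rw [pow_succ', Module.End.mul_apply, sumAction_apply]
    rfl
  · funext r k
    exact sumAction_pow_coord _ _ _ _ _ (by omega)

/-- The equivariant map `J_1 ⊕ q J_{q+2} → J_{q+1} ⊗ J_{q+1}` sending the generator of `J_1` to the
invariant `jinv` and the generator of the `r`-th copy of `J_{q+2}` to `v_0 ⊗ v_r`. -/
noncomputable def decompMap (K : Type*) [Field K] (q : ℕ) :
    ((Fin 1 → K) × (Fin q → (Fin (q + 2) → K))) →ₗ[K]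
      TensorProduct K (Fin (q + 1) → K) (Fin (q + 1) → K) :=
  LinearMap.coprod (LinearMap.toSpanSingleton K _ (jinv K q) ∘ₗ LinearMap.proj 0)
    (∑ r : Fin q, ∑ k : Fin (q + 2),
      LinearMap.toSpanSingleton K _
        ((tTensorAction K (q + 1) ^ (k : ℕ)) (jmon K (q + 1) 0 r)) ∘ₗ
          LinearMap.proj k ∘ₗ LinearMap.proj r)

lemma decompMap_apply (q : ℕ) (x : (Fin 1 → K) × (Fin q → (Fin (q + 2) → K))) :
    decompMap K q x = x.1 0 • jinv K q + ∑ r : Fin q, ∑ k : Fin (q + 2),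
      x.2 r k • (tTensorAction K (q + 1) ^ (k : ℕ)) (jmon K (q + 1) 0 r) := by
  simp [decompMap, LinearMap.sum_apply]

lemma decompMap_sumAction (q : ℕ) [Fact (q + 2).Prime] [CharP K (q + 2)]
    (x : (Fin 1 → K) × (Fin q → (Fin (q + 2) → K))) :
    decompMap K q (sumAction K q x) = tTensorAction K (q + 1) (decompMap K q x) := by
  rw [decompMap_apply, decompMap_apply, sumAction_apply, map_add, map_smul, tTensorAction_jinv,
    map_sum]
  simp only [Pi.zero_apply, zero_smul, smul_zero, zero_add]
  refine Finset.sum_congr rfl fun r _ => ?_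
  -- The bottom coordinate of the shift is `0`, and the top power of `T` on the right vanishes.
  rw [Fin.sum_univ_succ, jordanShift_zero, zero_smul, zero_add, map_sum,
    Fin.sum_univ_castSucc (n := q + 1) (f := fun k => tTensorAction K (q + 1) _), map_smul, ← Module.End.mul_apply, ← pow_succ', Fin.val_last, tTensorAction_pow_char_jmon,
    smul_zero, add_zero]
  refine Finset.sum_congr rfl fun k _ => ?_
  rw [jordanShift_succ, map_smul, ← Module.End.mul_apply, ← pow_succ', Fin.val_succ,
    Fin.val_castSucc]

/-- The map is injective on the socle: the images of the socle generators have degrees `q` and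
`q + 1 + r`, so each is detected by a single coefficient that vanishes on all the others. -/
lemma decompMap_socle (q : ℕ) [Fact (q + 2).Prime] [CharP K (q + 2)]
    (x : (Fin 1 → K) × (Fin q → (Fin (q + 2) → K))) (hx : sumAction K q x = 0)
    (hf : decompMap K q x = 0) : x = 0 := by
  have hlow : ∀ (r : Fin q) (k : Fin (q + 1)), x.2 r k.castSucc = 0 := by
    intro r k
    rw [← jordanShift_succ (q + 1) (x.2 r) k]
    exact congrFun (congrFun (congrArg Prod.snd hx) r) k.succ
  have hf' : x.1 0 • jinv K q + ∑ r : Fin q, x.2 r (Fin.last _) •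
      (tTensorAction K (q + 1) ^ (q + 1)) (jmon K (q + 1) 0 r) = 0 := by
    rw [← hf, decompMap_apply]
    congr 1
    refine Finset.sum_congr rfl fun r _ => ?_
    rw [Fin.sum_univ_castSucc, Fin.val_last]
    simp [hlow]
  have hco : ∀ a b : Fin (q + 1),
      x.1 0 * (if (a : ℕ) + b = q then (-1) ^ (a : ℕ) else 0) + ∑ r : Fin q,
        x.2 r (Fin.last _) *
          (if (a : ℕ) + b = r + (q + 1) then ((q + 1).choose a : K) else 0) = 0 := by
    intro a b
    have := congrArg (jcoeff K (q + 1) a b) hf'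
    simpa only [map_add, map_sum, map_smul, jcoeff_jinv, jcoeff_socle, smul_eq_mul, map_zero]
      using this
  have h1 : x.1 0 = 0 := by
    have h := hco 0 (Fin.last q)
    rw [Finset.sum_eq_zero] at h
    · simpa using h
    · intro r _
      rw [if_neg, mul_zero]
      simp only [Fin.val_zero, Fin.val_last]
      omega
  have h2 : ∀ r : Fin q, x.2 r (Fin.last _) = 0 := by
    intro r
    have h := hco r.succ (Fin.last q)
    rw [Finset.sum_eq_single r, h1, zero_mul, zero_add, if_pos] at h
    · refine (mul_eq_zero.1 h).resolve_right (cast_choose_ne_zero q _ ?_)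
      have := r.succ.2
      omega
    · simp only [Fin.val_succ, Fin.val_last]
      omega
    · intro s _ hs
      have : (s : ℕ) ≠ r := fun h => hs (Fin.ext h)
      rw [if_neg, mul_zero]
      simp only [Fin.val_succ, Fin.val_last]
      omega
    · simp
  refine Prod.ext ?_ ?_
  · funext i
    rw [Subsingleton.elim i 0]
    exact h1
  · funext r k
    exact Fin.lastCases (h2 r) (hlow r) k

lemma decompMap_injective (q : ℕ) [Fact (q + 2).Prime] [CharP K (q + 2)] :
    Function.Injective (decompMap K q) := by
  -- An element killed by `N ^ (m + 1)` and by the map has `N x` killed by both `N ^ m` and the map,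
  -- which reduces to the kernel of `N = sumAction`.
  have key : ∀ (m : ℕ) (x : (Fin 1 → K) × (Fin q → (Fin (q + 2) → K))),
      (sumAction K q ^ m) x = 0 → decompMap K q x = 0 → x = 0 := by
    intro m
    induction m with
    | zero =>
      intro x hx _
      simpa using hx
    | succ m ih =>
      intro x hx hf
      refine decompMap_socle q x (ih _ ?_ ?_) hf
      · rwa [← Module.End.mul_apply, ← pow_succ]
      · rw [decompMap_sumAction, hf, map_zero]
  rw [injective_iff_map_eq_zero]
  exact fun x hx => key _ x (sumAction_pow_eq_zero q x) hx

lemma exists_decomp (q : ℕ) [Fact (q + 2).Prime] [CharP K (q + 2)] :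
    ∃ e : TensorProduct K (Fin (q + 1) → K) (Fin (q + 1) → K) ≃ₗ[K]
        (Fin 1 → K) × (Fin q → (Fin (q + 2) → K)),
      ∀ z, e (tTensorAction K (q + 1) z) =
        (0, fun r => jordanShift K (q + 2) ((e z).2 r)) := by
  have hdim : Module.finrank K ((Fin 1 → K) × (Fin q → (Fin (q + 2) → K))) =
      Module.finrank K (TensorProduct K (Fin (q + 1) → K) (Fin (q + 1) → K)) := by
    simp [Module.finrank_prod, Module.finrank_tensorProduct, Module.finrank_pi_fintype]
    ring
  let e := LinearEquiv.ofInjectiveOfFinrankEq (decompMap K q) (decompMap_injective q) hdim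
  refine ⟨e.symm, fun z => ?_⟩
  rw [LinearEquiv.symm_apply_eq, ← sumAction_apply]
  have h := decompMap_sumAction q (e.symm z)
  have hz : decompMap K q (e.symm z) = z := e.apply_symm_apply z
  rw [hz] at h
  exact h.symm

end

/-- In `Rep K[t]/(t^p)` over an algebraically closed field of characteristic `p > 2`,
`J_{p-1} ⊗ J_{p-1} ≅ J_1 ⊕ (p-2)·J_p`: there is a linear equivalence intertwining the
`t`-action `t ⊗ 1 + 1 ⊗ t` on the tensor square with the `t`-action on `J_1 ⊕ (p-2)·J_p`
(zero on `J_1`, the Jordan shift on each copy of `J_p`). -/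
theorem stmt0 (K : Type*) [Field K] [IsAlgClosed K] (p : ℕ) [Fact p.Prime] [CharP K p]
    (hp : 2 < p) :
    ∃ e : TensorProduct K (Fin (p - 1) → K) (Fin (p - 1) → K) ≃ₗ[K]
        (Fin 1 → K) × (Fin (p - 2) → (Fin p → K)),
      ∀ z, e (tTensorAction K (p - 1) z) = (0, fun r => jordanShift K p ((e z).2 r)) := by
  obtain ⟨q, rfl⟩ : ∃ q, p = q + 2 := ⟨p - 2, by omega⟩
  exact exists_decomp q
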